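/- Let (X,d) be a Polish space, f a continuous semi-flow on X, and x ∈ X a point whose motion is Lagrangian stable, i.e., Σ = closure(O₊(f,x)) is compact. Assume that the Birkhoff recurrent points of f lying in Σ are dense in Σ and that Σ is not minimal (there exists y ∈ Σ with closure(O₊(f,y)) ≠ Σ). Then there exists ε > 0 such that for every δ > 0 one can find y ∈ Σ with d(x,y) < δ and limsup_{t→+∞} d(f^t(x), f^t(y)) > ε. -/

import Mathlib

open Filter Topology Metric Set TopologicalSpace

/-- `f` is a continuous semi-flow on `X`: jointly continuous on `[0,∞) × X`,
`f 0 x = x`, and `f s (f t x) = f (s+t) x` for `s, t ≥ 0`. -/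
def IsSemiflow {X : Type*} [MetricSpace X] (f : ℝ → X → X) : Prop :=
  ContinuousOn (fun p : ℝ × X => f p.1 p.2) (Set.Ici 0 ×ˢ Set.univ) ∧
  (∀ x, f 0 x = x) ∧
  (∀ s t : ℝ, 0 ≤ s → 0 ≤ t → ∀ x, f s (f t x) = f (s + t) x)

/-- the forward orbit `O₊(f,x) = {f t x : t ≥ 0}`. -/
def posOrbit {X : Type*} [MetricSpace X] (f : ℝ → X → X) (x : X) : Set X :=
  (fun t => f t x) '' Set.Ici (0 : ℝ)

/-- `x` is Birkhoff recurrent for `f`. -/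
def BirkhoffRecurrent {X : Type*} [MetricSpace X] (f : ℝ → X → X) (x : X) : Prop :=
  ∀ ε > (0:ℝ), ∃ T > (0:ℝ), ∀ τ ≥ (0:ℝ), ∀ υ ≥ (0:ℝ),
    ∃ t : ℝ, τ < t ∧ t < τ + T ∧ dist (f υ x) (f t x) < ε

/-- `f` is topologically quasi-transitive: some forward orbit is dense. -/
def QuasiTransitive {X : Type*} [MetricSpace X] (f : ℝ → X → X) : Prop :=
  ∃ x : X, Dense (posOrbit f x)

/-- `(X,f)` is chaotic: quasi-transitive, Birkhoff recurrent points dense, and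
two motions far away from each other. -/
def Chaotic {X : Type*} [MetricSpace X] (f : ℝ → X → X) : Prop :=
  QuasiTransitive f ∧ Dense {x : X | BirkhoffRecurrent f x} ∧
  ∃ x y : X, closure (posOrbit f x) ∩ closure (posOrbit f y) = ∅

/-!
The forward orbit of `x` accumulates at each Birkhoff recurrent point of its closure `Σ`, hence at
`x` itself, and therefore at every point of `Σ`. Non-minimality provides `z ∈ Σ` whose forward
orbit stays at a positive distance `r` from `x`. For a recurrent `y` close to `x`, let `T` bound the
gaps between the times at which `y` returns close to itself. By continuity, whenever the orbit of
`x` comes close enough to `z` it follows the orbit of `z` for a time `T`, and during that time `y`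
returns: at that instant `f t y` is close to `x`, while `f t x` is at least nearly `r` from `x`.
-/

section

variable {X : Type*} [MetricSpace X] {f : ℝ → X → X} {x y z : X}

namespace IsSemiflow

theorem continuous_apply (hf : IsSemiflow f) {t : ℝ} (ht : 0 ≤ t) : Continuous (f t) :=
  hf.1.comp_continuous (Continuous.prodMk_right t) fun _ ↦ ⟨ht, mem_univ _⟩

theorem continuousOn_orbit (hf : IsSemiflow f) (x : X) :
    ContinuousOn (fun t ↦ f t x) (Ici 0) :=
  hf.1.comp (Continuous.prodMk_left x).continuousOn fun _ ht ↦ ⟨ht, mem_univ _⟩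

theorem tendstoUniformlyOn (hf : IsSemiflow f) {K : Set ℝ} (hK : IsCompact K) (hK₀ : K ⊆ Ici 0)
    (z : X) : TendstoUniformlyOn (fun w t ↦ f t w) (fun t ↦ f t z) (𝓝 z) K := by
  have hcont : ContinuousOn (Function.uncurry fun w t ↦ f t w) (univ ×ˢ K) :=
    hf.1.comp continuous_swap.continuousOn fun p hp ↦ ⟨hK₀ hp.2, mem_univ _⟩
  refine Metric.tendstoUniformlyOn_iff.2 fun ε hε ↦ ?_
  obtain ⟨v, hv, hvε⟩ := hK.mem_uniformity_of_prod hcont (mem_univ z) (dist_mem_uniformity hε)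
  rw [nhdsWithin_univ] at hv
  filter_upwards [hv] with w hw t ht
  rw [dist_comm]
  exact hvε w hw t ht

theorem self_mem_posOrbit (hf : IsSemiflow f) (x : X) : x ∈ posOrbit f x :=
  ⟨0, self_mem_Ici, hf.2.1 x⟩

theorem apply_mem_posOrbit (hf : IsSemiflow f) {t : ℝ} (ht : 0 ≤ t) (hy : y ∈ posOrbit f x) :
    f t y ∈ posOrbit f x := by
  obtain ⟨s, hs, rfl⟩ := hy
  exact ⟨t + s, add_nonneg ht hs, (hf.2.2 t s ht hs x).symm⟩

theorem closure_posOrbit_subset (hf : IsSemiflow f) (hy : y ∈ closure (posOrbit f x)) :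
    closure (posOrbit f y) ⊆ closure (posOrbit f x) := by
  refine closure_minimal ?_ isClosed_closure
  rintro _ ⟨t, ht, rfl⟩
  exact map_mem_closure (hf.continuous_apply ht) hy fun _ ↦ hf.apply_mem_posOrbit ht

theorem mem_posOrbit_or_mapClusterPt (hf : IsSemiflow f) (hz : z ∈ closure (posOrbit f x)) :
    z ∈ posOrbit f x ∨ MapClusterPt z atTop (fun t ↦ f t x) := by
  refine or_iff_not_imp_right.2 fun hcluster ↦ ?_
  obtain ⟨U, hU, hleave⟩ : ∃ U ∈ 𝓝 z, ∀ᶠ t in atTop, f t x ∉ U := by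
    simpa [mapClusterPt_iff_frequently] using hcluster
  obtain ⟨τ, hτ⟩ := eventually_atTop.1 hleave
  have hclosed : IsClosed ((fun t ↦ f t x) '' Icc 0 τ) :=
    (isCompact_Icc.image_of_continuousOn
      ((hf.continuousOn_orbit x).mono Icc_subset_Ici_self)).isClosed
  have hinter : posOrbit f x ∩ U ⊆ (fun t ↦ f t x) '' Icc 0 τ := by
    rintro _ ⟨⟨t, ht, rfl⟩, htU⟩
    exact ⟨t, ⟨ht, le_of_not_ge fun h ↦ hτ t h htU⟩, rfl⟩
  have hzU : z ∈ closure (posOrbit f x ∩ U) :=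
    mem_closure_iff_frequently.2 ((mem_closure_iff_frequently.1 hz).and_eventually hU)
  exact image_mono Icc_subset_Ici_self (closure_minimal hinter hclosed hzU)

theorem mapClusterPt_of_mapClusterPt_apply (hf : IsSemiflow f) {s : ℝ} (hs : 0 ≤ s)
    (hz : MapClusterPt z atTop (fun t ↦ f t (f s x))) :
    MapClusterPt z atTop (fun t ↦ f t x) := by
  have hshift : (fun t ↦ f t (f s x)) =ᶠ[atTop] (fun t ↦ f t x) ∘ (· + s) := by
    filter_upwards [eventually_ge_atTop 0] with t ht using hf.2.2 t s ht hs x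
  exact .of_comp (tendsto_atTop_add_const_right _ s tendsto_id) (hz.congrFun hshift)

theorem mapClusterPt_apply (hf : IsSemiflow f) {s : ℝ} (hs : 0 ≤ s)
    (hz : MapClusterPt z atTop (fun t ↦ f t x)) :
    MapClusterPt (f s z) atTop (fun t ↦ f t x) := by
  have hshift : f s ∘ (fun t ↦ f t x) =ᶠ[atTop] (fun t ↦ f t x) ∘ (s + ·) := by
    filter_upwards [eventually_ge_atTop 0] with t ht using hf.2.2 s t hs ht x
  exact .of_comp (tendsto_atTop_add_const_left _ s tendsto_id)
    ((hz.continuousAt_comp (hf.continuous_apply hs).continuousAt).congrFun hshift)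

theorem mapClusterPt_of_mem_closure_posOrbit (hf : IsSemiflow f)
    (hy : MapClusterPt y atTop (fun t ↦ f t x)) (hz : z ∈ closure (posOrbit f y)) :
    MapClusterPt z atTop (fun t ↦ f t x) := by
  refine closure_minimal (t := {w | MapClusterPt w atTop fun t ↦ f t x}) ?_
    isClosed_setOfPred_clusterPt hz
  rintro _ ⟨s, hs, rfl⟩
  exact hf.mapClusterPt_apply hs hy

end IsSemiflow

namespace BirkhoffRecurrent

theorem mapClusterPt_self (hy : BirkhoffRecurrent f y) (hf : IsSemiflow f) :
    MapClusterPt y atTop (fun t ↦ f t y) := by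
  refine Metric.nhds_basis_ball.mapClusterPt_iff_frequently.2 fun ε hε ↦
    frequently_atTop.2 fun τ ↦ ?_
  obtain ⟨T, -, hT⟩ := hy ε hε
  obtain ⟨t, hτt, -, hdist⟩ := hT (max τ 0) (le_max_right τ 0) 0 le_rfl
  rw [hf.2.1, dist_comm] at hdist
  exact ⟨t, (le_max_left τ 0).trans hτt.le, hdist⟩

theorem mapClusterPt_of_mem_closure_posOrbit (hy : BirkhoffRecurrent f y) (hf : IsSemiflow f)
    (hyx : y ∈ closure (posOrbit f x)) : MapClusterPt y atTop (fun t ↦ f t x) := by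
  rcases hf.mem_posOrbit_or_mapClusterPt hyx with ⟨s, hs, rfl⟩ | hcluster
  · exact hf.mapClusterPt_of_mapClusterPt_apply hs (hy.mapClusterPt_self hf)
  · exact hcluster

theorem frequently_dist_lt_and_infDist_lt (hy : BirkhoffRecurrent f y) (hf : IsSemiflow f)
    (hz : MapClusterPt z atTop (fun t ↦ f t x)) {ε : ℝ} (hε : 0 < ε) :
    ∃ᶠ t in atTop, dist y (f t y) < ε ∧ infDist (f t x) (posOrbit f z) < ε := by
  refine frequently_atTop.2 fun τ ↦ ?_
  obtain ⟨T, -, hreturn⟩ := hy ε hε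
  have hshadow : ∀ᶠ w in 𝓝 z, ∀ s ∈ Icc 0 T, dist (f s z) (f s w) < ε :=
    Metric.tendstoUniformlyOn_iff.1
      (hf.tendstoUniformlyOn isCompact_Icc Icc_subset_Ici_self z) ε hε
  obtain ⟨t₀, ht₀, hclose⟩ := frequently_atTop.1 (hz.frequently hshadow) (max τ 0)
  obtain ⟨hτt₀, ht₀_nonneg⟩ := max_le_iff.1 ht₀
  obtain ⟨t, ht₀t, htT, hyt⟩ := hreturn t₀ ht₀_nonneg 0 le_rfl
  have hs : t - t₀ ∈ Icc 0 T := ⟨by linarith, by linarith⟩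
  have hxt : dist (f t x) (f (t - t₀) z) < ε := by
    simpa [hf.2.2 _ _ hs.1 ht₀_nonneg, dist_comm] using hclose _ hs
  rw [hf.2.1] at hyt
  exact ⟨t, hτt₀.trans ht₀t.le, hyt,
    (infDist_le_dist_of_mem (mem_image_of_mem _ hs.1)).trans_lt hxt⟩

theorem frequently_lt_dist (hy : BirkhoffRecurrent f y) (hf : IsSemiflow f)
    (hz : MapClusterPt z atTop (fun t ↦ f t x)) {c : ℝ}
    (hc : c + dist x y < infDist x (posOrbit f z)) :
    ∃ᶠ t in atTop, c < dist (f t x) (f t y) := by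
  have hε : 0 < (infDist x (posOrbit f z) - (c + dist x y)) / 2 := by linarith
  refine (hy.frequently_dist_lt_and_infDist_lt hf hz hε).mono ?_
  rintro t ⟨hyt, hxt⟩
  have hdist : infDist x (posOrbit f z) ≤
      infDist (f t x) (posOrbit f z) + (dist x y + dist y (f t y) + dist (f t x) (f t y)) :=
    calc infDist x (posOrbit f z)
      _ ≤ infDist (f t x) (posOrbit f z) + dist x (f t x) := infDist_le_infDist_add_dist
      _ ≤ _ := by
        gcongr
        rw [dist_comm (f t x) (f t y)]
        exact dist_triangle4 ..
  linarith

end BirkhoffRecurrent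

namespace IsSemiflow

theorem mapClusterPt_of_mem_closure_birkhoffRecurrent (hf : IsSemiflow f)
    (hx : x ∈ closure ({y | BirkhoffRecurrent f y} ∩ closure (posOrbit f x)))
    (hz : z ∈ closure (posOrbit f x)) : MapClusterPt z atTop (fun t ↦ f t x) := by
  have hxx : MapClusterPt x atTop (fun t ↦ f t x) :=
    closure_minimal (t := {w | MapClusterPt w atTop fun t ↦ f t x})
      (fun _ hy ↦ hy.1.mapClusterPt_of_mem_closure_posOrbit hf hy.2) isClosed_setOfPred_clusterPt hx
  exact hf.mapClusterPt_of_mem_closure_posOrbit hxx hz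

theorem infDist_posOrbit_pos (hf : IsSemiflow f) (hz : z ∈ closure (posOrbit f x))
    (hne : closure (posOrbit f z) ≠ closure (posOrbit f x)) :
    0 < infDist x (posOrbit f z) := by
  have hx : x ∉ closure (posOrbit f z) := fun hx ↦
    hne ((hf.closure_posOrbit_subset hz).antisymm (hf.closure_posOrbit_subset hx))
  exact (infDist_pos_iff_notMem_closure ⟨z, hf.self_mem_posOrbit z⟩).1 hx

end IsSemiflow

theorem thmB_sensitivity_general (hf : IsSemiflow f)
    (hrec : x ∈ closure ({z | BirkhoffRecurrent f z} ∩ closure (posOrbit f x)))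
    (hnm : ∃ y ∈ closure (posOrbit f x), closure (posOrbit f y) ≠ closure (posOrbit f x)) :
    ∃ ε : ℝ, 0 < ε ∧ ∀ δ > (0 : ℝ), ∃ y ∈ closure (posOrbit f x), dist x y < δ ∧
      (ε : EReal) < limsup (fun t : ℝ ↦ (dist (f t x) (f t y) : EReal)) atTop := by
  obtain ⟨z, hz, hne⟩ := hnm
  set r := infDist x (posOrbit f z)
  have hr : 0 < r := hf.infDist_posOrbit_pos hz hne
  have hcluster := hf.mapClusterPt_of_mem_closure_birkhoffRecurrent hrec hz
  refine ⟨r / 4, by positivity, fun δ hδ ↦ ?_⟩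
  obtain ⟨y, ⟨hy, hyx⟩, hxy⟩ := Metric.mem_closure_iff.1 hrec (min δ (r / 2)) (by positivity)
  obtain ⟨hxyδ, hxyr⟩ := lt_min_iff.1 hxy
  refine ⟨y, hyx, hxyδ, ?_⟩
  have hfar : ∃ᶠ t in atTop, r / 2 < dist (f t x) (f t y) :=
    hy.frequently_lt_dist hf hcluster (by linarith)
  calc ((r / 4 : ℝ) : EReal)
    _ < ((r / 2 : ℝ) : EReal) := EReal.coe_lt_coe_iff.2 (by linarith)
    _ ≤ _ := le_limsup_of_frequently_le (hfar.mono fun t ht ↦ EReal.coe_le_coe_iff.2 ht.le)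

end

/-- Theorem B: a chaotic Lagrangian stable motion is sensitive. -/
theorem thmB_sensitivity {X : Type*} [MetricSpace X] [CompleteSpace X]
    [SeparableSpace X] (f : ℝ → X → X) (hf : IsSemiflow f) (x : X)
    (hcpt : IsCompact (closure (posOrbit f x)))
    (hrec : closure (posOrbit f x) ⊆
      closure ({z : X | BirkhoffRecurrent f z} ∩ closure (posOrbit f x)))
    (hnm : ∃ y ∈ closure (posOrbit f x), closure (posOrbit f y) ≠ closure (posOrbit f x)) :
    ∃ ε : ℝ, 0 < ε ∧ ∀ δ > (0:ℝ), ∃ y ∈ closure (posOrbit f x), dist x y < δ ∧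
      (ε : EReal) <
        Filter.limsup (fun t : ℝ => (dist (f t x) (f t y) : EReal)) Filter.atTop :=
  thmB_sensitivity_general hf (hrec (subset_closure (hf.self_mem_posOrbit x))) hnm
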